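/- Let f(p) = Σ_{m=0}^∞ pᵐ aₘ be an entire power series with quaternionic coefficients. Then for every imaginary unit I ∈ 𝕊, the equality (1/π) ∫_{ℝ²} e^{−(x²+y²)} |f(x+yI)|² \,dx\,dy = Σ_{m=0}^∞ m! |aₘ|² holds in [0, ∞]. In particular, f belongs to the slice hyperholomorphic quaternionic Fock space 𝔉(ℍ) if and only if Σ_{m=0}^∞ m! |aₘ|² < ∞. -/

import Mathlib

open MeasureTheory Real Nat

noncomputable section

local notation "ℍ" => Quaternion ℝ

/-- The sphere of quaternionic imaginary units. -/
def quatSphere : Set ℍ := {q | q.re = 0 ∧ ‖q‖ = 1}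

/-- The point `x + y I` of the slice `ℂ_I`. -/
def sliceVal (I : ℍ) (z : ℝ × ℝ) : ℍ := ((z.1 : ℍ)) + ((z.2 : ℍ)) * I

/-- The squared Fock norm of `f` on the slice `ℂ_I`, with values in `[0,∞]`. -/
def fockNormSq (I : ℍ) (f : ℍ → ℍ) : ENNReal :=
  ENNReal.ofReal π⁻¹ *
    ∫⁻ z : ℝ × ℝ, ENNReal.ofReal (Real.exp (-(z.1 ^ 2 + z.2 ^ 2)) * ‖f (sliceVal I z)‖ ^ 2)

/-!
Left multiplication by `ℂ_I` turns `ℍ` into a complex inner product space with its usual norm, and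
`f` restricted to the slice into an ordinary power series `∑ zᵐ aₘ` with values in that space. On
each circle `|z| = r` the terms `zᵐ aₘ` are pairwise orthogonal, so by Parseval the integral of
`‖f‖²` over the circle is `2π ∑ r²ᵐ ‖aₘ‖²`. Integrating in polar coordinates, Tonelli leaves the
Gaussian moments `2π ∫₀^∞ r²ᵐ⁺¹ exp (-r²) dr = π m!`.
-/

section OrthogonalSeries

open Filter Topology

variable {α ι 𝕜 E : Type*} [MeasurableSpace α] {μ : Measure α} [RCLike 𝕜]
  [NormedAddCommGroup E]

lemma lintegral_enorm_sq_eq_ofReal_integral_norm_sq {v : α → E} (hv : MemLp v 2 μ) :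
    ∫⁻ t, ‖v t‖ₑ ^ 2 ∂μ = ENNReal.ofReal (∫ t, ‖v t‖ ^ 2 ∂μ) := by
  have hint : Integrable (fun t ↦ ‖v t‖ ^ 2) μ := hv.integrable_norm_pow two_ne_zero
  rw [ofReal_integral_eq_lintegral_ofReal hint (.of_forall fun t ↦ by positivity)]
  simp_rw [ENNReal.ofReal_pow (norm_nonneg _), ofReal_norm]

variable [InnerProductSpace 𝕜 E]

lemma integrable_inner_of_memLp_two {v w : α → E} (hv : MemLp v 2 μ) (hw : MemLp w 2 μ) :
    Integrable (fun t ↦ inner 𝕜 (v t) (w t)) μ :=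
  (hv.norm.integrable_mul hw.norm).mono (hv.1.inner hw.1) <| .of_forall fun t ↦ by
    simpa using norm_inner_le_norm (𝕜 := 𝕜) (v t) (w t)

theorem integral_norm_sum_sq_of_pairwise_orthogonal {u : ι → α → E} (s : Finset ι)
    (hu : ∀ i, MemLp (u i) 2 μ)
    (horth : Pairwise fun i j ↦ ∫ t, inner 𝕜 (u i t) (u j t) ∂μ = 0) :
    ∫ t, ‖∑ i ∈ s, u i t‖ ^ 2 ∂μ = ∑ i ∈ s, ∫ t, ‖u i t‖ ^ 2 ∂μ := by
  have hint (i j : ι) : Integrable (fun t ↦ inner 𝕜 (u i t) (u j t)) μ :=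
    integrable_inner_of_memLp_two (hu i) (hu j)
  have inner_self_integral (v : α → E) :
      ∫ t, inner 𝕜 (v t) (v t) ∂μ = ((∫ t, ‖v t‖ ^ 2 ∂μ : ℝ) : 𝕜) := by
    simp_rw [inner_self_eq_norm_sq_to_K, ← RCLike.ofReal_pow, integral_ofReal]
  apply RCLike.ofReal_injective (K := 𝕜)
  calc ((∫ t, ‖∑ i ∈ s, u i t‖ ^ 2 ∂μ : ℝ) : 𝕜)
      = ∫ t, ∑ i ∈ s, ∑ j ∈ s, inner 𝕜 (u i t) (u j t) ∂μ := by
        simp_rw [← inner_self_integral, sum_inner, inner_sum]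
    _ = ∑ i ∈ s, ∑ j ∈ s, ∫ t, inner 𝕜 (u i t) (u j t) ∂μ := by
        rw [integral_finsetSum _ fun i _ ↦ integrable_finsetSum _ fun j _ ↦ hint i j]
        exact Finset.sum_congr rfl fun i _ ↦ integral_finsetSum _ fun j _ ↦ hint i j
    _ = ∑ i ∈ s, ∫ t, inner 𝕜 (u i t) (u i t) ∂μ :=
        Finset.sum_congr rfl fun i hi ↦
          Finset.sum_eq_single_of_mem i hi fun j _ hji ↦ horth hji.symm
    _ = ((∑ i ∈ s, ∫ t, ‖u i t‖ ^ 2 ∂μ : ℝ) : 𝕜) := by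
        simp_rw [inner_self_integral, RCLike.ofReal_sum]

theorem lintegral_enorm_sum_sq_of_pairwise_orthogonal {u : ι → α → E} (s : Finset ι)
    (hu : ∀ i, MemLp (u i) 2 μ)
    (horth : Pairwise fun i j ↦ ∫ t, inner 𝕜 (u i t) (u j t) ∂μ = 0) :
    ∫⁻ t, ‖∑ i ∈ s, u i t‖ₑ ^ 2 ∂μ = ∑ i ∈ s, ∫⁻ t, ‖u i t‖ₑ ^ 2 ∂μ := by
  have hsum : MemLp (fun t ↦ ∑ i ∈ s, u i t) 2 μ := memLp_finsetSum s fun i _ ↦ hu i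
  rw [lintegral_enorm_sq_eq_ofReal_integral_norm_sq hsum,
    integral_norm_sum_sq_of_pairwise_orthogonal s hu horth,
    ENNReal.ofReal_sum_of_nonneg fun i _ ↦ integral_nonneg fun t ↦ by positivity]
  exact Finset.sum_congr rfl fun i _ ↦
    (lintegral_enorm_sq_eq_ofReal_integral_norm_sq (hu i)).symm

theorem lintegral_enorm_sq_eq_tsum_of_pairwise_orthogonal [Countable ι] {u : ι → α → E}
    {U : α → E} (hu : ∀ i, AEStronglyMeasurable (u i) μ)
    (hsum : ∀ᵐ t ∂μ, Summable fun i ↦ ‖u i t‖) (hL2 : MemLp (fun t ↦ ∑' i, ‖u i t‖) 2 μ)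
    (horth : Pairwise fun i j ↦ ∫ t, inner 𝕜 (u i t) (u j t) ∂μ = 0)
    (hU : ∀ᵐ t ∂μ, HasSum (fun i ↦ u i t) (U t)) :
    ∫⁻ t, ‖U t‖ₑ ^ 2 ∂μ = ∑' i, ∫⁻ t, ‖u i t‖ₑ ^ 2 ∂μ := by
  have norm_sum_le : ∀ᵐ t ∂μ, ∀ s : Finset ι, ‖∑ i ∈ s, u i t‖ ≤ ∑' i, ‖u i t‖ := by
    filter_upwards [hsum] with t ht s
    exact (norm_sum_le _ _).trans (ht.sum_le_tsum s fun i _ ↦ norm_nonneg _)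
  have huL2 (i : ι) : MemLp (u i) 2 μ := hL2.mono' (hu i) <| by
    filter_upwards [norm_sum_le] with t ht
    simpa using ht {i}
  have partial_sums : Tendsto (fun s : Finset ι ↦ ∫⁻ t, ‖∑ i ∈ s, u i t‖ₑ ^ 2 ∂μ) atTop
      (𝓝 (∫⁻ t, ‖U t‖ₑ ^ 2 ∂μ)) := by
    refine tendsto_lintegral_filter_of_dominated_convergence'
      (fun t ↦ ‖∑' i, ‖u i t‖‖ₑ ^ 2) (.of_forall fun s ↦ ?_) (.of_forall fun s ↦ ?_) ?_ ?_
    · exact (s.aestronglyMeasurable_fun_sum fun i _ ↦ hu i).enorm.pow_const 2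
    · filter_upwards [norm_sum_le] with t ht
      gcongr
      exact enorm_le_iff_norm_le.2 ((ht s).trans (le_norm_self _))
    · rw [lintegral_enorm_sq_eq_ofReal_integral_norm_sq hL2]
      exact ENNReal.ofReal_ne_top
    · filter_upwards [hU] with t ht
      exact (ENNReal.continuous_pow 2).continuousAt.tendsto.comp
        (continuous_enorm.continuousAt.tendsto.comp ht)
  simp_rw [lintegral_enorm_sum_sq_of_pairwise_orthogonal _ huL2 horth] at partial_sums
  exact tendsto_nhds_unique partial_sums ENNReal.summable.hasSum

end OrthogonalSeries

section PowerSeries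

open Filter

lemma summable_norm_pow_smul_of_norm_lt {𝕜 E : Type*} [NormedField 𝕜] [NormedAddCommGroup E]
    [NormedSpace 𝕜 E] {a : ℕ → E} {z w : 𝕜} (hw : Summable fun m ↦ w ^ m • a m)
    (hzw : ‖z‖ < ‖w‖) : Summable fun m ↦ ‖z ^ m • a m‖ := by
  have hw_pos : 0 < ‖w‖ := (norm_nonneg z).trans_lt hzw
  obtain ⟨C, hC⟩ := hw.tendsto_atTop_zero.norm.bddAbove_range
  refine .of_nonneg_of_le (fun m ↦ norm_nonneg _) (fun m ↦ ?_)
    ((summable_geometric_of_lt_one (by positivity) ((div_lt_one hw_pos).2 hzw)).mul_left C)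
  calc ‖z ^ m • a m‖ = ‖w ^ m • a m‖ * (‖z‖ / ‖w‖) ^ m := by
        rw [norm_smul, norm_smul, norm_pow, norm_pow, div_pow]
        field_simp
    _ ≤ C * (‖z‖ / ‖w‖) ^ m := by
        gcongr
        exact hC ⟨m, rfl⟩

lemma summable_norm_pow_smul {𝕜 E : Type*} [NontriviallyNormedField 𝕜] [NormedAddCommGroup E]
    [NormedSpace 𝕜 E] {a : ℕ → E} (ha : ∀ z : 𝕜, Summable fun m ↦ z ^ m • a m) (z : 𝕜) :
    Summable fun m ↦ ‖z ^ m • a m‖ :=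
  have ⟨w, hzw⟩ := NormedField.exists_lt_norm 𝕜 ‖z‖
  summable_norm_pow_smul_of_norm_lt (ha w) hzw

lemma stronglyMeasurable_of_hasSum_pow_smul {𝕜 E : Type*} [NormedField 𝕜] [MeasurableSpace 𝕜]
    [OpensMeasurableSpace 𝕜] [SecondCountableTopology 𝕜] [NormedAddCommGroup E]
    [NormedSpace 𝕜 E] {a : ℕ → E} {F : 𝕜 → E}
    (hF : ∀ z, HasSum (fun m ↦ z ^ m • a m) (F z)) : StronglyMeasurable F :=
  stronglyMeasurable_of_tendsto atTop
    (fun s : Finset ℕ ↦ Continuous.stronglyMeasurable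
      (f := fun z : 𝕜 ↦ ∑ m ∈ s, z ^ m • a m) (by fun_prop))
    (tendsto_pi_nhds.2 hF)

lemma setIntegral_exp_int_mul_I_eq_zero {k : ℤ} (hk : k ≠ 0) :
    ∫ θ in Set.Ioo (-π) π, Complex.exp (k * Complex.I * θ) = 0 := by
  have hkI : (k * Complex.I : ℂ) ≠ 0 := mul_ne_zero (mod_cast hk) Complex.I_ne_zero
  have periodic : Complex.exp (k * Complex.I * π) = Complex.exp (k * Complex.I * (-π : ℝ)) := by
    rw [Complex.exp_eq_exp_iff_exists_int]
    exact ⟨k, by push_cast; ring⟩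
  rw [← integral_Ioc_eq_integral_Ioo,
    ← intervalIntegral.integral_of_le (by linarith [pi_pos]), integral_exp_mul_complex hkI,
    periodic, sub_self, zero_div]

variable {E : Type*} [NormedAddCommGroup E] [InnerProductSpace ℂ E] {a : ℕ → E} {F : ℂ → E}

lemma inner_circleMap_pow_smul (r θ : ℝ) (m n : ℕ) (x y : E) :
    inner ℂ (circleMap 0 r θ ^ m • x) (circleMap 0 r θ ^ n • y) =
      r ^ (m + n) * inner ℂ x y * Complex.exp (((n - m : ℤ) : ℂ) * Complex.I * θ) := by
  have exp_diff : Complex.exp (-(θ * Complex.I)) ^ m * Complex.exp (θ * Complex.I) ^ n =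
      Complex.exp (((n - m : ℤ) : ℂ) * Complex.I * θ) := by
    rw [← Complex.exp_nat_mul, ← Complex.exp_nat_mul, ← Complex.exp_add]
    congr 1
    push_cast
    ring
  simp only [inner_smul_left, inner_smul_right, circleMap_zero, map_pow, map_mul, mul_pow,
    Complex.conj_ofReal, ← Complex.exp_conj, Complex.conj_I, mul_neg, ← exp_diff]
  ring

theorem lintegral_circleMap_enorm_sq_eq_tsum {r : ℝ}
    (ha : Summable fun m ↦ ‖(r : ℂ) ^ m • a m‖)
    (hF : ∀ θ, HasSum (fun m ↦ circleMap 0 r θ ^ m • a m) (F (circleMap 0 r θ))) :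
    ∫⁻ θ in Set.Ioo (-π) π, ‖F (circleMap 0 r θ)‖ₑ ^ 2 =
      ∑' m, ENNReal.ofReal (2 * π) * (‖r‖ₑ ^ m * ‖a m‖ₑ) ^ 2 := by
  have norm_term (m : ℕ) (θ : ℝ) :
      ‖circleMap 0 r θ ^ m • a m‖ = ‖(r : ℂ) ^ m • a m‖ := by
    simp [norm_smul]
  have horth : Pairwise fun m n ↦ ∫ θ in Set.Ioo (-π) π,
      inner ℂ (circleMap 0 r θ ^ m • a m) (circleMap 0 r θ ^ n • a n) = 0 := fun m n hmn ↦ by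
    simp_rw [inner_circleMap_pow_smul, integral_const_mul]
    rw [setIntegral_exp_int_mul_I_eq_zero (by omega), mul_zero]
  have measurable_term (m : ℕ) : AEStronglyMeasurable (fun θ ↦ circleMap 0 r θ ^ m • a m)
      (volume.restrict (Set.Ioo (-π) π)) :=
    Continuous.aestronglyMeasurable (by fun_prop)
  rw [lintegral_enorm_sq_eq_tsum_of_pairwise_orthogonal measurable_term ?_ ?_ horth
    (.of_forall hF)]
  · refine tsum_congr fun m ↦ ?_
    have enorm_term (θ : ℝ) : ‖circleMap 0 r θ ^ m • a m‖ₑ = ‖r‖ₑ ^ m * ‖a m‖ₑ := by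
      rw [← ofReal_norm, norm_term, ofReal_norm, enorm_smul, enorm_pow]
      simp [enorm]
    simp_rw [enorm_term, lintegral_const, Measure.restrict_apply_univ, Real.volume_Ioo]
    rw [mul_comm, sub_neg_eq_add, ← two_mul]
  · simpa only [norm_term] using Eventually.of_forall fun _ : ℝ ↦ ha
  · simpa only [norm_term] using memLp_const _

theorem lintegral_radial_mul_enorm_sq_eq_tsum {w : ℝ → ENNReal} (hw : Measurable w)
    (hF : ∀ z, HasSum (fun m ↦ z ^ m • a m) (F z)) :
    ∫⁻ z, w ‖z‖ * ‖F z‖ₑ ^ 2 = ∑' m,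
      (∫⁻ r in Set.Ioi 0, ENNReal.ofReal (2 * π * r ^ (2 * m + 1)) * w r) * ‖a m‖ₑ ^ 2 := by
  have hFm : Measurable fun z ↦ ‖F z‖ₑ := (stronglyMeasurable_of_hasSum_pow_smul hF).enorm
  have polar (p : ℝ × ℝ) : Complex.polarCoord.symm p = circleMap 0 p.1 p.2 := by
    rw [Complex.polarCoord_symm_apply, circleMap_zero, Complex.exp_mul_I, Complex.ofReal_cos,
      Complex.ofReal_sin]
  have circle_measurable : Measurable fun p : ℝ × ℝ ↦ circleMap 0 p.1 p.2 := by
    unfold circleMap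
    fun_prop
  calc ∫⁻ z, w ‖z‖ * ‖F z‖ₑ ^ 2
      = ∫⁻ r in Set.Ioi 0, ∫⁻ θ in Set.Ioo (-π) π,
          ENNReal.ofReal r * (w |r| * ‖F (circleMap 0 r θ)‖ₑ ^ 2) := by
        rw [← Complex.lintegral_comp_polarCoord_symm, polarCoord_target,
          Measure.volume_eq_prod, ← Measure.prod_restrict]
        simp_rw [polar, norm_circleMap_zero, smul_eq_mul]
        refine lintegral_prod _ (Measurable.aemeasurable ?_)
        have := hFm.comp circle_measurable
        fun_prop
    _ = ∫⁻ r in Set.Ioi 0, ∑' m,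
          ENNReal.ofReal (2 * π * r ^ (2 * m + 1)) * w r * ‖a m‖ₑ ^ 2 := by
        refine setLIntegral_congr_fun measurableSet_Ioi fun r (hr : 0 < r) ↦ ?_
        have hθ : Measurable fun θ ↦ ‖F (circleMap 0 r θ)‖ₑ ^ 2 :=
          (hFm.comp (continuous_circleMap 0 r).measurable).pow_const 2
        rw [lintegral_const_mul _ (hθ.const_mul _), lintegral_const_mul _ hθ,
          lintegral_circleMap_enorm_sq_eq_tsum
            (summable_norm_pow_smul (fun z ↦ (hF z).summable) r) fun θ ↦ hF _,
          ← ENNReal.tsum_mul_left, ← ENNReal.tsum_mul_left]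
        refine tsum_congr fun m ↦ ?_
        rw [abs_of_pos hr, Real.enorm_of_nonneg hr.le, pow_succ,
          ENNReal.ofReal_mul (by positivity), ENNReal.ofReal_mul (by positivity),
          ENNReal.ofReal_mul (by positivity), ENNReal.ofReal_pow hr.le]
        ring
    _ = _ := by
        rw [lintegral_tsum fun m ↦ by fun_prop]
        exact tsum_congr fun m ↦ lintegral_mul_const _ (by fun_prop)

end PowerSeries

section Gaussian

lemma lintegral_rpow_mul_exp_neg_rpow {p q : ℝ} (hp : 0 < p) (hq : -1 < q) :
    ∫⁻ r in Set.Ioi 0, ENNReal.ofReal (r ^ q * exp (-r ^ p)) =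
      ENNReal.ofReal (1 / p * Gamma ((q + 1) / p)) := by
  rw [← integral_rpow_mul_exp_neg_rpow hp hq,
    ofReal_integral_eq_lintegral_ofReal (integrableOn_rpow_mul_exp_neg_rpow hq hp)]
  filter_upwards [ae_restrict_mem measurableSet_Ioi] with r (hr : 0 < r)
  positivity

lemma lintegral_two_pi_mul_odd_pow_mul_exp_neg_sq (m : ℕ) :
    ∫⁻ r in Set.Ioi 0,
        ENNReal.ofReal (2 * π * r ^ (2 * m + 1)) * ENNReal.ofReal (exp (-r ^ 2)) =
      ENNReal.ofReal π * m ! := by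
  calc _ = ∫⁻ r in Set.Ioi 0, ENNReal.ofReal (2 * π) *
          ENNReal.ofReal (r ^ ((2 * m + 1 : ℕ) : ℝ) * exp (-r ^ (2 : ℝ))) := by
        refine setLIntegral_congr_fun measurableSet_Ioi fun r (hr : 0 < r) ↦ ?_
        rw [← ENNReal.ofReal_mul (by positivity), ← ENNReal.ofReal_mul (by positivity),
          rpow_natCast, rpow_two, mul_assoc]
    _ = ENNReal.ofReal (2 * π) * ENNReal.ofReal (1 / 2 * m !) := by
        have hGamma : Gamma (((2 * m + 1 : ℕ) + 1) / 2) = m ! := by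
          rw [← Gamma_nat_eq_factorial]
          congr 1
          push_cast
          ring
        rw [lintegral_const_mul _ (by fun_prop), lintegral_rpow_mul_exp_neg_rpow two_pos
          (neg_one_lt_zero.trans_le (Nat.cast_nonneg _)), hGamma]
    _ = ENNReal.ofReal π * m ! := by
        rw [← ENNReal.ofReal_natCast, ← ENNReal.ofReal_mul (by positivity),
          ← ENNReal.ofReal_mul pi_nonneg]
        congr 1
        ring

theorem lintegral_exp_neg_norm_sq_mul_enorm_sq_eq_tsum {E : Type*} [NormedAddCommGroup E]
    [InnerProductSpace ℂ E] {a : ℕ → E} {F : ℂ → E}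
    (hF : ∀ z, HasSum (fun m ↦ z ^ m • a m) (F z)) :
    ∫⁻ z, ENNReal.ofReal (exp (-‖z‖ ^ 2)) * ‖F z‖ₑ ^ 2 =
      ENNReal.ofReal π * ∑' m, m ! * ‖a m‖ₑ ^ 2 := by
  rw [lintegral_radial_mul_enorm_sq_eq_tsum (w := fun r ↦ ENNReal.ofReal (exp (-r ^ 2)))
    (by fun_prop) hF]
  simp_rw [lintegral_two_pi_mul_odd_pow_mul_exp_neg_sq, mul_assoc, ENNReal.tsum_mul_left]

end Gaussian

section Slice

variable {I : ℍ}

lemma mul_self_of_mem_quatSphere (hI : I ∈ quatSphere) : I * I = -1 := by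
  rw [← sq, Quaternion.sq_eq_neg_normSq.2 hI.1, Quaternion.normSq_eq_norm_mul_self, hI.2]
  simp

/-- The embedding of real algebras `ℂ → ℍ` sending `i` to `I`, whose range is the slice `ℂ_I`. -/
def sliceEmbedding (hI : I ∈ quatSphere) : ℂ →ₐ[ℝ] ℍ :=
  Complex.liftAux I (mul_self_of_mem_quatSphere hI)

lemma sliceEmbedding_apply (hI : I ∈ quatSphere) (z : ℂ) :
    sliceEmbedding hI z = sliceVal I (z.re, z.im) := by
  simp [sliceEmbedding, Complex.liftAux_apply, sliceVal, Quaternion.coe_mul_eq_smul]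

lemma norm_sliceEmbedding (hI : I ∈ quatSphere) (z : ℂ) : ‖sliceEmbedding hI z‖ = ‖z‖ := by
  rw [← sq_eq_sq₀ (norm_nonneg _) (norm_nonneg _), sq, ← Quaternion.normSq_eq_norm_mul_self,
    sliceEmbedding_apply, sliceVal, Quaternion.normSq_add, map_mul,
    Quaternion.normSq_eq_norm_mul_self I, hI.2, Quaternion.normSq_coe, Quaternion.normSq_coe,
    Complex.sq_norm, Complex.normSq_apply]
  simp [hI.1, sq]

/-- Left multiplication by the slice `ℂ_I` makes `ℍ` a complex normed space. The structure depends
on `I`, so it is not an instance. -/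
abbrev sliceNormedSpace (hI : I ∈ quatSphere) : NormedSpace ℂ ℍ where
  toModule := Module.compHom ℍ (sliceEmbedding hI).toRingHom
  norm_smul_le z q := by
    change ‖sliceEmbedding hI z * q‖ ≤ _
    rw [norm_mul, norm_sliceEmbedding]

/-- The complex inner product on `ℍ` for the scalar action of `ℂ_I` by left multiplication. It comes
from the parallelogram law of the quaternionic norm, which therefore stays the norm of `ℍ`. -/
abbrev sliceInnerProductSpace (hI : I ∈ quatSphere) : InnerProductSpace ℂ ℍ :=
  letI := sliceNormedSpace hI
  .ofNorm ℂ fun x y ↦ by simpa only [sq] using parallelogram_law_with_norm ℝ x y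

lemma fockNormSq_eq_lintegral_complex (hI : I ∈ quatSphere) (f : ℍ → ℍ) :
    fockNormSq I f = ENNReal.ofReal π⁻¹ *
      ∫⁻ z : ℂ, ENNReal.ofReal (exp (-‖z‖ ^ 2)) * ‖f (sliceEmbedding hI z)‖ₑ ^ 2 := by
  rw [fockNormSq, ← Complex.volume_preserving_equiv_real_prod.lintegral_comp_emb
    Complex.measurableEquivRealProd.measurableEmbedding]
  congr 2 with z
  rw [ENNReal.ofReal_mul (exp_nonneg _), ENNReal.ofReal_pow (norm_nonneg _),
    ofReal_norm, sliceEmbedding_apply, Complex.sq_norm, Complex.normSq_apply]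
  simp [Complex.measurableEquivRealProd_apply, pow_two]

end Slice

lemma tsum_ofReal_lt_top_iff_summable {ι : Type*} {x : ι → ℝ} (hx : ∀ i, 0 ≤ x i) :
    ∑' i, ENNReal.ofReal (x i) < ⊤ ↔ Summable x := by
  refine ⟨fun h ↦ ?_, Summable.tsum_ofReal_lt_top⟩
  simpa only [ENNReal.toReal_ofReal (hx _)] using ENNReal.summable_toReal h.ne

theorem fockNormSq_eq_tsum_general (f : ℍ → ℍ) (a : ℕ → ℍ) (I : ℍ) (hI : I ∈ quatSphere)
    (hf : ∀ z : ℝ × ℝ, HasSum (fun m : ℕ ↦ sliceVal I z ^ m * a m) (f (sliceVal I z))) :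
    fockNormSq I f = ∑' m : ℕ, ENNReal.ofReal ((m ! : ℝ) * ‖a m‖ ^ 2) ∧
      (fockNormSq I f < ⊤ ↔ Summable fun m : ℕ ↦ (m ! : ℝ) * ‖a m‖ ^ 2) := by
  have key : fockNormSq I f = ∑' m : ℕ, ENNReal.ofReal ((m ! : ℝ) * ‖a m‖ ^ 2) := by
    let := sliceInnerProductSpace hI
    have hF (z : ℂ) : HasSum (fun m : ℕ ↦ z ^ m • a m) (f (sliceEmbedding hI z)) := by
      have smul_eq (m : ℕ) : z ^ m • a m = sliceEmbedding hI z ^ m * a m := by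
        rw [← map_pow]; rfl
      simpa only [smul_eq, sliceEmbedding_apply] using hf (z.re, z.im)
    rw [fockNormSq_eq_lintegral_complex hI, lintegral_exp_neg_norm_sq_mul_enorm_sq_eq_tsum hF,
      ← mul_assoc, ← ENNReal.ofReal_mul (by positivity), inv_mul_cancel₀ pi_ne_zero,
      ENNReal.ofReal_one, one_mul]
    simp_rw [ENNReal.ofReal_mul (Nat.cast_nonneg _), ENNReal.ofReal_natCast,
      ENNReal.ofReal_pow (norm_nonneg _), ofReal_norm]
  exact ⟨key, key ▸ tsum_ofReal_lt_top_iff_summable fun m ↦ by positivity⟩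

theorem fockNormSq_eq_tsum (f : ℍ → ℍ) (a : ℕ → ℍ)
    (hf : ∀ p : ℍ, HasSum (fun m : ℕ => p ^ m * a m) (f p))
    (I : ℍ) (hI : I ∈ quatSphere) :
    fockNormSq I f = ∑' m : ℕ, ENNReal.ofReal ((m ! : ℝ) * ‖a m‖ ^ 2) ∧
      (fockNormSq I f < ⊤ ↔ Summable fun m : ℕ => (m ! : ℝ) * ‖a m‖ ^ 2) :=
  fockNormSq_eq_tsum_general f a I hI fun z ↦ hf (sliceVal I z)
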